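/- Let d ≥ 1 and C ≥ 1 be integers, let f_1, …, f_C : ℝ^d → (0, ∞) be measurable functions such that ∏_{c=1}^C f_c is Lebesgue-integrable, and for each c let p_c : ℝ^d × ℝ^d → [0, ∞) be a measurable kernel satisfying ∫_{ℝ^d} p_c(y | x) f_c(x)² dx = f_c(y)² for every y ∈ ℝ^d. Define g(x^{(1)}, …, x^{(C)}, y) := ∏_{c=1}^C [ f_c(x^{(c)})² · p_c(y | x^{(c)}) / f_c(y) ] on ℝ^{(C+1)d}. Then for every y ∈ ℝ^d, ∫_{ℝ^d} ⋯ ∫_{ℝ^d} g(x^{(1)}, …, x^{(C)}, y) dx^{(1)} ⋯ dx^{(C)} = ∏_{c=1}^C f_c(y); consequently the y-marginal of the (finite) measure with density g is proportional to the product density ∏_{c=1}^C f_c. -/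

import Mathlib

open MeasureTheory

/-- Proposition `extended` of the paper: if each kernel `p c` has stationary
(unnormalised) density `(f c)^2`, then the `y`-marginal of the extended density `g` is the
product density `∏ c, f c y`. -/
theorem statement0 (d C : ℕ) (hd : 1 ≤ d) (hC : 1 ≤ C)
    (f : Fin C → (Fin d → ℝ) → ℝ)
    (hf_pos : ∀ c x, 0 < f c x)
    (hf_meas : ∀ c, Measurable (f c))
    (hf_int : Integrable (fun x : Fin d → ℝ => ∏ c, f c x) volume)
    (p : Fin C → (Fin d → ℝ) → (Fin d → ℝ) → ℝ)   -- `p c y x` is `p_c(y | x)`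
    (hp_nonneg : ∀ c y x, 0 ≤ p c y x)
    (hp_meas : ∀ c, Measurable (Function.uncurry (p c)))
    (hp_stat : ∀ c y, (∫ x : Fin d → ℝ, p c y x * (f c x) ^ 2) = (f c y) ^ 2) :
    ∀ y : Fin d → ℝ,
      (∫ x : Fin C → Fin d → ℝ, ∏ c, ((f c (x c)) ^ 2 * p c y (x c) / f c y)) =
        ∏ c, f c y := by
  intro y
  rw [integral_fintype_prod_volume_eq_prod
    (fun c (x : Fin d → ℝ) => (f c x) ^ 2 * p c y x / f c y)]
  refine Finset.prod_congr rfl fun c _ => ?_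
  have h : (fun x : Fin d → ℝ => (f c x) ^ 2 * p c y x / f c y)
      = fun x => (p c y x * (f c x) ^ 2) / f c y := by
    funext x
    rw [mul_comm]
  rw [h, integral_div, hp_stat]
  have := (hf_pos c y).ne'
  field_simp
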